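/- arXiv:2301.07437 — 3 statements merged into one kernel-verified Lean document; each statement's English description precedes it below -/
import Mathlib

section
/- Let G be a group, K a normal subgroup of G, and ρ̃ : K → CircleDeg1Liftˣ a group homomorphism. Suppose g ∈ G is lift-compatible for ρ̃, i.e. there exists L ∈ CircleDeg1Liftˣ such that for every x ∈ K there is an integer n with ρ̃(g⁻¹xg) = L⁻¹ · ρ̃(x) · L · translate(n)⁻¹. Then for every x ∈ K, the real number τ(ρ̃(x)) − τ(ρ̃(g⁻¹xg)) is an integer. (First half of Lemma 3.1: the map k'_{ρ̃}(g) is integer-valued.) -/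
/-- The translation `x ↦ x + a` as an element of `CircleDeg1Liftˣ`. -/
noncomputable def translateU (a : ℝ) : CircleDeg1Liftˣ :=
  CircleDeg1Lift.translate (Multiplicative.ofAdd a)

/-- The Poincaré translation number of an invertible degree-one lift. -/
noncomputable def tn (u : CircleDeg1Liftˣ) : ℝ :=
  CircleDeg1Lift.translationNumber (u : CircleDeg1Lift)

theorem tn_mul_translateU (u : CircleDeg1Liftˣ) (n : ℤ) :
    tn (u * translateU n) = tn u + n := by
  have hc : Commute (u : CircleDeg1Lift) (translateU n : CircleDeg1Lift) := by
    rw [CircleDeg1Lift.commute_iff_commute]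
    intro y
    simp only [translateU, CircleDeg1Lift.translate_apply]
    exact (u : CircleDeg1Lift).commute_int_add n y
  unfold tn
  rw [Units.val_mul, CircleDeg1Lift.translationNumber_mul_of_commute hc]
  congr 1
  exact CircleDeg1Lift.translationNumber_translate _

theorem stmt_1 {G : Type*} [Group G] (K : Subgroup G) (hK : K.Normal)
    (ρ : K →* CircleDeg1Liftˣ) (g : G)
    (hg : ∃ L : CircleDeg1Liftˣ, ∀ x : K, ∃ n : ℤ,
      ρ ⟨g⁻¹ * x * g, hK.conj_mem' x x.2 g⟩ = L⁻¹ * ρ x * L * (translateU n)⁻¹) :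
    ∀ x : K, ∃ n : ℤ,
      tn (ρ x) - tn (ρ ⟨g⁻¹ * x * g, hK.conj_mem' x x.2 g⟩) = n := by
  obtain ⟨L, hL⟩ := hg
  intro x
  obtain ⟨n, hn⟩ := hL x
  refine ⟨n, ?_⟩
  have h1 := tn_mul_translateU (ρ ⟨g⁻¹ * x * g, hK.conj_mem' x x.2 g⟩) n
  have h2 : tn (L⁻¹ * ρ x * L) = tn (ρ x) := by
    unfold tn
    rw [Units.val_mul, Units.val_mul]
    exact CircleDeg1Lift.translationNumber_conj_eq' L _
  have h3 : ρ ⟨g⁻¹ * x * g, hK.conj_mem' x x.2 g⟩ * translateU n = L⁻¹ * ρ x * L := by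
    rw [hn, inv_mul_cancel_right]
  rw [h3, h2] at h1
  linarith
end

section
/- Let G be a group, K a normal subgroup of G, and ρ̃ : K → CircleDeg1Liftˣ a group homomorphism. Suppose g ∈ G is lift-compatible for ρ̃, i.e. there exists L ∈ CircleDeg1Liftˣ such that for every x ∈ K there is an integer n with ρ̃(g⁻¹xg) = L⁻¹ · ρ̃(x) · L · translate(n)⁻¹. Then for all x, y ∈ K: τ(ρ̃(xy)) − τ(ρ̃(g⁻¹(xy)g)) = (τ(ρ̃(x)) − τ(ρ̃(g⁻¹xg))) + (τ(ρ̃(y)) − τ(ρ̃(g⁻¹yg))). (Second half of Lemma 3.1: the map k'_{ρ̃}(g) : K → ℤ is a homomorphism.) -/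
theorem translateU_comm (n : ℤ) (u : CircleDeg1Liftˣ) : Commute (translateU n) u := by
  apply Units.ext
  apply CircleDeg1Lift.ext
  intro x
  simp [translateU, add_comm]

theorem tn_translateU (a : ℝ) : tn (translateU a) = a :=
  CircleDeg1Lift.translationNumber_translate a

theorem tn_conj_translate (L u : CircleDeg1Liftˣ) (n : ℤ) :
    tn (L⁻¹ * u * L * (translateU n)⁻¹) = tn u - n := by
  have hc : Commute ((L⁻¹ * u * L : CircleDeg1Liftˣ) : CircleDeg1Lift)
      (((translateU n)⁻¹ : CircleDeg1Liftˣ) : CircleDeg1Lift) :=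
    ((translateU_comm n (L⁻¹ * u * L)).symm.inv_right).map (Units.coeHom _)
  have h1 := CircleDeg1Lift.translationNumber_mul_of_commute hc
  have h2 : tn (translateU n)⁻¹ = -n := by
    have := CircleDeg1Lift.translationNumber_units_inv (translateU n)
    have h3 := tn_translateU n
    unfold tn at *
    rw [this, h3]
  have h4 : tn (L⁻¹ * u * L) = tn u := CircleDeg1Lift.translationNumber_conj_eq' L u
  unfold tn at *
  rw [Units.val_mul, h1, h2, h4]
  ring

theorem translateU_add (a b : ℝ) : translateU (a + b) = translateU a * translateU b := by
  simp [translateU, ofAdd_add]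

theorem stmt_2 {G : Type*} [Group G] (K : Subgroup G) (hK : K.Normal)
    (ρ : K →* CircleDeg1Liftˣ) (g : G)
    (hg : ∃ L : CircleDeg1Liftˣ, ∀ x : K, ∃ n : ℤ,
      ρ ⟨g⁻¹ * x * g, hK.conj_mem' x x.2 g⟩ = L⁻¹ * ρ x * L * (translateU n)⁻¹) :
    ∀ x y : K,
      tn (ρ (x * y)) - tn (ρ ⟨g⁻¹ * ↑(x * y) * g, hK.conj_mem' (x * y) (x * y).2 g⟩) =
        (tn (ρ x) - tn (ρ ⟨g⁻¹ * x * g, hK.conj_mem' x x.2 g⟩)) +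
        (tn (ρ y) - tn (ρ ⟨g⁻¹ * y * g, hK.conj_mem' y y.2 g⟩)) := by
  intro x y
  obtain ⟨L, hL⟩ := hg
  obtain ⟨a, ha⟩ := hL x
  obtain ⟨b, hb⟩ := hL y
  obtain ⟨c, hc⟩ := hL (x * y)
  have hm : ρ ⟨g⁻¹ * ↑(x * y) * g, hK.conj_mem' (x * y) (x * y).2 g⟩ =
      ρ ⟨g⁻¹ * x * g, hK.conj_mem' x x.2 g⟩ * ρ ⟨g⁻¹ * y * g, hK.conj_mem' y y.2 g⟩ := by
    rw [← map_mul]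
    congr 1
    apply Subtype.ext
    simp [mul_assoc]
  have e : ρ ⟨g⁻¹ * ↑(x * y) * g, hK.conj_mem' (x * y) (x * y).2 g⟩ =
      L⁻¹ * ρ (x * y) * L * (translateU ((a + b : ℤ) : ℝ))⁻¹ := by
    have h1 := (translateU_comm a (L⁻¹ * ρ y * L)).inv_left.eq
    rw [hm, ha, hb, Int.cast_add, add_comm (a : ℝ), translateU_add, mul_inv_rev, map_mul]
    calc _ = L⁻¹ * ρ x * L * ((translateU a)⁻¹ * (L⁻¹ * ρ y * L)) * (translateU b)⁻¹ := by group
      _ = _ := by rw [h1]; group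
  rw [e, ha, hb, tn_conj_translate, tn_conj_translate, tn_conj_translate]
  push_cast
  ring
end

section
/- Let G be a group, K a normal subgroup of G, and ρ̃ : K → CircleDeg1Liftˣ a group homomorphism such that every g ∈ G is lift-compatible for ρ̃, i.e. for every g ∈ G there exists L ∈ CircleDeg1Liftˣ such that for every x ∈ K there is an integer n with ρ̃(g⁻¹xg) = L⁻¹ · ρ̃(x) · L · translate(n)⁻¹. Then there exists a function κ : G → K → ℤ satisfying: (i) (κ(g)(x) : ℝ) = τ(ρ̃(x)) − τ(ρ̃(g⁻¹xg)) for all g ∈ G, x ∈ K; (ii) κ(g)(xy) = κ(g)(x) + κ(g)(y) for all g ∈ G and x, y ∈ K; (iii) κ(g₁g₂)(x) = κ(g₁)(x) + κ(g₂)(g₁⁻¹xg₁) for all g₁, g₂ ∈ G and x ∈ K; (iv) κ(gx) = κ(g) for all g ∈ G and x ∈ K, so κ descends to a crossed homomorphism G/K → Hom(K, ℤ). (The general construction of the crossed homomorphism k_{ρ̃}, Section 5.) -/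
theorem comm_translateU (u : CircleDeg1Liftˣ) (n : ℤ) : Commute u (translateU n) := by
  apply Units.ext
  apply CircleDeg1Lift.ext
  intro x
  have h := (CircleDeg1Lift.commute_int_add (u : CircleDeg1Lift) n) x
  simpa [translateU] using h

theorem tn_mul_comm {u v : CircleDeg1Liftˣ} (h : Commute u v) : tn (u * v) = tn u + tn v := by
  have h' : Commute (u : CircleDeg1Lift) (v : CircleDeg1Lift) := by
    exact congrArg Units.val h.eq
  simpa [tn] using CircleDeg1Lift.translationNumber_mul_of_commute h'

theorem tn_inv (u : CircleDeg1Liftˣ) : tn u⁻¹ = - tn u :=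
  CircleDeg1Lift.translationNumber_units_inv u

theorem tn_conj (u v : CircleDeg1Liftˣ) : tn (u⁻¹ * v * u) = tn v := by
  simpa [tn] using CircleDeg1Lift.translationNumber_conj_eq' u (v : CircleDeg1Lift)

theorem stmt_15 {G : Type*} [Group G] (K : Subgroup G) (hK : K.Normal)
    (ρ : K →* CircleDeg1Liftˣ)
    (hlift : ∀ g : G, ∃ L : CircleDeg1Liftˣ, ∀ x : K, ∃ n : ℤ,
      ρ ⟨g⁻¹ * x * g, hK.conj_mem' x x.2 g⟩ = L⁻¹ * ρ x * L * (translateU n)⁻¹) :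
    ∃ κ : G → K → ℤ,
      (∀ (g : G) (x : K),
        (κ g x : ℝ) = tn (ρ x) - tn (ρ ⟨g⁻¹ * x * g, hK.conj_mem' x x.2 g⟩)) ∧
      (∀ (g : G) (x y : K), κ g (x * y) = κ g x + κ g y) ∧
      (∀ (g₁ g₂ : G) (x : K),
        κ (g₁ * g₂) x = κ g₁ x + κ g₂ ⟨g₁⁻¹ * x * g₁, hK.conj_mem' x x.2 g₁⟩) ∧
      (∀ (g : G) (x : K), κ (g * x) = κ g) := by
  choose L n hn using hlift
  have h1 : ∀ (g : G) (x : K),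
      (n g x : ℝ) = tn (ρ x) - tn (ρ ⟨g⁻¹ * x * g, hK.conj_mem' x x.2 g⟩) := by
    intro g x
    rw [hn, tn_mul_comm (comm_translateU _ _).inv_right, tn_conj, tn_inv, tn_translateU]
    ring
  refine ⟨n, h1, ?_, ?_, ?_⟩
  · intro g x y
    have e : (⟨g⁻¹ * (x * y : K) * g, hK.conj_mem' _ (x * y).2 g⟩ : K)
        = ⟨g⁻¹ * x * g, hK.conj_mem' x x.2 g⟩ * ⟨g⁻¹ * y * g, hK.conj_mem' y y.2 g⟩ := by
      apply Subtype.ext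
      simp [mul_assoc]
    have e2 := congrArg ρ e
    rw [map_mul, hn, hn, hn, map_mul] at e2
    have c := (comm_translateU ((L g)⁻¹ * ρ y * L g) (n g x)).inv_right.eq
    have e3 : (translateU (n g (x * y)))⁻¹ = (translateU (n g x))⁻¹ * (translateU (n g y))⁻¹ := by
      apply mul_left_cancel (a := (L g)⁻¹ * (ρ x * ρ y) * L g)
      rw [e2]
      calc _ = (L g)⁻¹ * ρ x * L g * ((translateU (n g x))⁻¹ * ((L g)⁻¹ * ρ y * L g))
            * (translateU (n g y))⁻¹ := by group
        _ = _ := by rw [← c]; group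
    have e4 := congrArg tn e3
    rw [tn_mul_comm (comm_translateU _ _).inv_right, tn_inv, tn_inv, tn_inv,
      tn_translateU, tn_translateU, tn_translateU] at e4
    have : (n g (x * y) : ℝ) = n g x + n g y := by linarith
    exact_mod_cast this
  · intro g₁ g₂ x
    have e : (⟨(g₁ * g₂)⁻¹ * x * (g₁ * g₂), hK.conj_mem' x x.2 (g₁ * g₂)⟩ : K)
        = ⟨g₂⁻¹ * (g₁⁻¹ * x * g₁) * g₂,
            hK.conj_mem' _ (hK.conj_mem' x x.2 g₁) g₂⟩ := by
      apply Subtype.ext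
      simp [mul_assoc]
    have a := h1 (g₁ * g₂) x
    rw [e] at a
    have b := h1 g₁ x
    have c := h1 g₂ ⟨g₁⁻¹ * x * g₁, hK.conj_mem' x x.2 g₁⟩
    have : (n (g₁ * g₂) x : ℝ)
        = n g₁ x + n g₂ ⟨g₁⁻¹ * x * g₁, hK.conj_mem' x x.2 g₁⟩ := by
      rw [a, b, c]; ring
    exact_mod_cast this
  · intro g x
    funext y
    have e : (⟨(g * x)⁻¹ * y * (g * x), hK.conj_mem' y y.2 (g * x)⟩ : K)
        = x⁻¹ * ⟨g⁻¹ * y * g, hK.conj_mem' y y.2 g⟩ * x := by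
      apply Subtype.ext
      simp [mul_assoc]
    have a := h1 (g * x) y
    rw [e, map_mul, map_mul, map_inv, tn_conj, ← h1] at a
    exact_mod_cast a
end
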